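/- Let (e_k)_{k∈ℕ} be the standard orthonormal basis of ℓ², and let (x_k)_{k∈ℕ} ⊂ [0,∞) and (y_k)_{k∈ℕ} ⊂ (0,∞) be sequences such that Σ_{k: x_k ≤ 1} y_k < ∞. For t ∈ [0,1] and s > 0 set F(t) := Σ_{k: x_k ≤ t} e_k y_k^{1/2} − t Σ_{k: x_k ≤ 1} e_k y_k^{1/2} and F_s(t) := Σ_{k: x_k ≤ t} e_k y_k^{1/2} 𝟙_{y_k > s} − t Σ_{k: x_k ≤ 1} e_k y_k^{1/2} 𝟙_{y_k > s}, and let R := closure{F(t) : t ∈ [0,1]} and R(s) := {F_s(t) : t ∈ [0,1]}, both subsets of ℓ². Then the Hausdorff distance satisfies d_H(R(s), R) ≤ 2 (Σ_{k: x_k ≤ 1} y_k 𝟙_{y_k ≤ s})^{1/2}, and consequently d_H(R(s), R) → 0 as s ↓ 0. -/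

import Mathlib

open Filter

lemma bridge_aux (y : ℕ → ℝ) (hy : ∀ k, 0 < y k) (q p : ℕ → Prop) [DecidablePred q]
    [DecidablePred p] (hsum : Summable (fun k => if q k then y k else 0))
    (h : ∀ k, p k → q k) (k : ℕ) :
    (∑' k, if p k then Real.sqrt (y k) • lp.single 2 k (1 : ℝ) else 0 :
      lp (fun _ : ℕ => ℝ) 2) k = if p k then Real.sqrt (y k) else 0 := by
  have hm : Memℓp (fun k => if p k then Real.sqrt (y k) else 0 : ℕ → ℝ) 2 := by
    rw [memℓp_gen_iff (by norm_num)]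
    refine Summable.of_nonneg_of_le (fun k => by positivity) (fun k => ?_) hsum
    by_cases hp : p k
    · simp [hp, h k hp, Real.sq_sqrt (hy k).le]
    · simp only [hp, if_false]
      simp only [norm_zero, ENNReal.toReal_ofNat, Real.rpow_ofNat]
      split_ifs
      · simpa using (hy k).le
      · simp
  let v : lp (fun _ : ℕ => ℝ) 2 := ⟨_, hm⟩
  have hs := lp.hasSum_single (p := 2) (by norm_num) v
  have he : (fun k => if p k then Real.sqrt (y k) • lp.single 2 k (1 : ℝ) else 0 :
      ℕ → lp (fun _ : ℕ => ℝ) 2) = fun i => lp.single 2 i (v i) := by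
    funext i
    have hv : v i = if p i then Real.sqrt (y i) else 0 := rfl
    rw [hv]
    split_ifs
    · rw [← lp.single_smul]; simp
    · simp
  rw [he, hs.tsum_eq]

/-- truncation approximation of the bridge set in `ℓ²`.
With `F(t) = Σ_{x_k ≤ t} √y_k e_k − t Σ_{x_k ≤ 1} √y_k e_k` and its truncation `F_s`
(keeping only the terms with `y_k > s`), and `R = closure{F(t) : t ∈ [0,1]}`,
`R(s) = {F_s(t) : t ∈ [0,1]}`, one has
`d_H(R(s), R) ≤ 2 (Σ_{x_k ≤ 1, y_k ≤ s} y_k)^{1/2}` and hence `d_H(R(s), R) → 0` as `s ↓ 0`. -/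
theorem truncated_bridge_hausdorff
    (x : ℕ → ℝ) (y : ℕ → ℝ) (hx : ∀ k, 0 ≤ x k) (hy : ∀ k, 0 < y k)
    (hsum : Summable (fun k => if x k ≤ 1 then y k else 0))
    (F : ℝ → lp (fun _ : ℕ => ℝ) 2)
    (hF : ∀ t, F t
      = (∑' k, if x k ≤ t then Real.sqrt (y k) • lp.single 2 k (1 : ℝ) else 0)
        - t • (∑' k, if x k ≤ 1 then Real.sqrt (y k) • lp.single 2 k (1 : ℝ) else 0))
    (Fs : ℝ → ℝ → lp (fun _ : ℕ => ℝ) 2)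
    (hFs : ∀ s t, Fs s t
      = (∑' k, if x k ≤ t ∧ s < y k then Real.sqrt (y k) • lp.single 2 k (1 : ℝ) else 0)
        - t • (∑' k, if x k ≤ 1 ∧ s < y k then Real.sqrt (y k) • lp.single 2 k (1 : ℝ) else 0)) :
    (∀ s > (0 : ℝ),
      Metric.hausdorffDist
          (Set.range fun t : Set.Icc (0 : ℝ) 1 => Fs s t)
          (closure (Set.range fun t : Set.Icc (0 : ℝ) 1 => F t))
        ≤ 2 * Real.sqrt (∑' k, if x k ≤ 1 ∧ y k ≤ s then y k else 0)) ∧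
    Tendsto
      (fun s => Metric.hausdorffDist
          (Set.range fun t : Set.Icc (0 : ℝ) 1 => Fs s t)
          (closure (Set.range fun t : Set.Icc (0 : ℝ) 1 => F t)))
      (nhdsWithin 0 (Set.Ioi 0)) (nhds 0) := by
  have hS : ∀ s, Summable (fun k => if x k ≤ 1 ∧ y k ≤ s then y k else 0) := by
    intro s
    refine Summable.of_nonneg_of_le (fun k => ?_) (fun k => ?_) hsum
    · have := (hy k).le
      split_ifs <;> simp [this]
    · have := (hy k).le
      split_ifs <;> simp_all
  have key : ∀ s t, t ∈ Set.Icc (0 : ℝ) 1 → dist (Fs s t) (F t) ≤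
      2 * Real.sqrt (∑' k, if x k ≤ 1 ∧ y k ≤ s then y k else 0) := by
    intro s t ht
    have h1 : dist (Fs s t) (F t) ≤
        Real.sqrt (∑' k, if x k ≤ 1 ∧ y k ≤ s then y k else 0) := by
      rw [dist_eq_norm]
      apply Real.le_sqrt_of_sq_le
      have hn := lp.norm_rpow_eq_tsum (p := 2) (by norm_num) (Fs s t - F t)
      have hsm := (lp.memℓp (Fs s t - F t)).summable (by norm_num)
      simp only [ENNReal.toReal_ofNat, Real.rpow_ofNat] at hn hsm
      rw [hn]
      refine hsm.tsum_le_tsum (fun k => ?_) (hS s)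
      have a1 := bridge_aux y hy (fun k => x k ≤ 1) (fun k => x k ≤ t) hsum
        (fun k hk => hk.trans ht.2) k
      have a2 := bridge_aux y hy (fun k => x k ≤ 1) (fun k => x k ≤ 1) hsum
        (fun k hk => hk) k
      have a3 := bridge_aux y hy (fun k => x k ≤ 1) (fun k => x k ≤ t ∧ s < y k) hsum
        (fun k hk => hk.1.trans ht.2) k
      have a4 := bridge_aux y hy (fun k => x k ≤ 1) (fun k => x k ≤ 1 ∧ s < y k) hsum
        (fun k hk => hk.1) k
      have e : (Fs s t - F t) k = ((if x k ≤ t ∧ s < y k then Real.sqrt (y k) else 0)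
          - t * (if x k ≤ 1 ∧ s < y k then Real.sqrt (y k) else 0))
          - ((if x k ≤ t then Real.sqrt (y k) else 0)
          - t * (if x k ≤ 1 then Real.sqrt (y k) else 0)) := by
        rw [hFs, hF, ← a1, ← a2, ← a3, ← a4]
        rfl
      rw [e, Real.norm_eq_abs, sq_abs]
      have hq := Real.sq_sqrt (hy k).le
      have hyk := (hy k).le
      obtain ⟨t0, t1⟩ := ht
      by_cases c : s < y k
      · simp [c, not_le.mpr c]
      · simp only [c, and_false, if_false, not_lt.mp c, and_true]
        by_cases c1 : x k ≤ 1
        · by_cases c2 : x k ≤ t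
          · simp only [c1, c2, if_true]
            have : (0 - t * 0 - (√(y k) - t * √(y k))) ^ 2 = (1 - t) ^ 2 * y k := by
              rw [← hq]; simp only [Real.sqrt_sq (Real.sqrt_nonneg _)]; ring
            rw [this]
            exact mul_le_of_le_one_left hyk (by nlinarith)
          · simp only [c1, c2, if_true, if_false]
            have : (0 - t * 0 - (0 - t * √(y k))) ^ 2 = t ^ 2 * y k := by
              rw [← hq]; simp only [Real.sqrt_sq (Real.sqrt_nonneg _)]; ring
            rw [this]
            exact mul_le_of_le_one_left hyk (by nlinarith)
        · have c2 : ¬ x k ≤ t := fun h => c1 (h.trans t1)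
          simp [c1, c2]
    have := Real.sqrt_nonneg (∑' k, if x k ≤ 1 ∧ y k ≤ s then y k else 0)
    linarith
  have main : ∀ s > (0 : ℝ),
      Metric.hausdorffDist
          (Set.range fun t : Set.Icc (0 : ℝ) 1 => Fs s t)
          (closure (Set.range fun t : Set.Icc (0 : ℝ) 1 => F t))
        ≤ 2 * Real.sqrt (∑' k, if x k ≤ 1 ∧ y k ≤ s then y k else 0) := by
    intro s _
    rw [Metric.hausdorffDist_closure₂]
    apply Metric.hausdorffDist_le_of_mem_dist (by positivity)
    · rintro _ ⟨t, rfl⟩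
      exact ⟨_, ⟨t, rfl⟩, key s t t.2⟩
    · rintro _ ⟨t, rfl⟩
      exact ⟨_, ⟨t, rfl⟩, by rw [dist_comm]; exact key s t t.2⟩
  refine ⟨main, ?_⟩
  have hT : Tendsto (fun s => ∑' k, if x k ≤ 1 ∧ y k ≤ s then y k else 0)
      (nhdsWithin 0 (Set.Ioi 0)) (nhds (∑' _ : ℕ, (0 : ℝ))) := by
    refine tendsto_tsum_of_dominated_convergence hsum (fun k => ?_)
      (Eventually.of_forall fun s k => ?_)
    · apply tendsto_const_nhds.congr'
      have : ∀ᶠ s in nhdsWithin (0 : ℝ) (Set.Ioi 0), s < y k :=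
        nhdsWithin_le_nhds (Iio_mem_nhds (hy k))
      filter_upwards [this] with s hs
      simp [not_le.mpr hs]
    · have := hy k
      split_ifs <;> simp_all [abs_of_pos, le_of_lt]
  have hT2 : Tendsto (fun s => 2 * Real.sqrt (∑' k, if x k ≤ 1 ∧ y k ≤ s then y k else 0))
      (nhdsWithin 0 (Set.Ioi 0)) (nhds 0) := by
    simpa using (hT.sqrt).const_mul 2
  refine tendsto_of_tendsto_of_tendsto_of_le_of_le' tendsto_const_nhds hT2
    (Eventually.of_forall fun s => Metric.hausdorffDist_nonneg) ?_
  filter_upwards [self_mem_nhdsWithin] with s hs using main s hs
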